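/- (Performance difference) Let G(x,u) = A x + B u + f(x,u) with ‖f(x,u)‖ ≤ β(‖x‖² + ‖u‖²) for ‖x‖ + ‖u‖ ≤ r_nl; let γ ∈ (0,1], Q ⪰ I, R ⪰ I, and K be such that √γ·(A+BK) is stable with Lyapunov solution P. Let x_{t+1} = √γ·G(x_t, K x_t) be the damped nonlinear trajectory from x₀, and suppose x₀ᵀ P x₀ ≤ r_nl²/(4β²‖P‖_op³). Then the nonlinear cost J_nl(K | γ, x₀) := Σ_{t=0}^∞ x_tᵀ (Q + KᵀRK) x_t converges, and J_nl(K | γ, x₀) − x₀ᵀ P x₀ = Σ_{t=0}^∞ γ · f(x_t, K x_t)ᵀ P ( G(x_t, K x_t) + (A + BK) x_t ). -/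

import Mathlib

open Matrix

/-- A real square matrix is stable if every complex eigenvalue has modulus `< 1`. -/
def IsStable {n : ℕ} (M : Matrix (Fin n) (Fin n) ℝ) : Prop :=
  ∀ μ ∈ spectrum ℂ (M.map Complex.ofReal), ‖μ‖ < 1

/-- Euclidean operator norm of a real matrix. -/
noncomputable def opNorm {p q : ℕ} (M : Matrix (Fin p) (Fin q) ℝ) : ℝ :=
  ‖LinearMap.toContinuousLinearMap (Matrix.toEuclideanLin M)‖

/-- Euclidean norm of a vector in `ℝ^n`. -/
noncomputable def evnorm {n : ℕ} (x : Fin n → ℝ) : ℝ :=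
  ‖(WithLp.equiv 2 (Fin n → ℝ)).symm x‖

/-- `P_{K,γ} = Σ_t γ^t ((A+BK)^t)ᵀ (Q + KᵀRK) (A+BK)^t`, the solution of the discounted
Lyapunov equation when `√γ (A+BK)` is stable. -/
noncomputable def lyapP {d m : ℕ} (A : Matrix (Fin d) (Fin d) ℝ) (B : Matrix (Fin d) (Fin m) ℝ)
    (Q : Matrix (Fin d) (Fin d) ℝ) (R : Matrix (Fin m) (Fin m) ℝ)
    (K : Matrix (Fin m) (Fin d) ℝ) (γ : ℝ) : Matrix (Fin d) (Fin d) ℝ :=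
  ∑' t : ℕ, γ ^ t • (((A + B * K) ^ t)ᵀ * (Q + Kᵀ * R * K) * (A + B * K) ^ t)

section helpers

attribute [local instance] Matrix.frobeniusNormedRing Matrix.frobeniusNormedAlgebra

theorem pow_bound_aux {d : ℕ} (M : Matrix (Fin d) (Fin d) ℝ) (h : IsStable M) :
    ∃ r : ℝ, 0 ≤ r ∧ r < 1 ∧ ∀ᶠ n : ℕ in Filter.atTop, ‖M ^ n‖ ≤ r ^ n := by
  have hsr : spectralRadius ℂ (M.map Complex.ofReal) < 1 := by
    rcases (spectrum ℂ (M.map Complex.ofReal)).eq_empty_or_nonempty with he | hne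
    · simp [spectralRadius, he]
    · obtain ⟨k, hk, hk2⟩ := spectrum.exists_nnnorm_eq_spectralRadius_of_nonempty hne
      rw [← hk2]
      have := h k hk
      exact_mod_cast this
  obtain ⟨r, hr1, hr2⟩ := ENNReal.lt_iff_exists_nnreal_btwn.1 hsr
  have ht := spectrum.pow_nnnorm_pow_one_div_tendsto_nhds_spectralRadius (M.map Complex.ofReal)
  have hev := ht.eventually (gt_mem_nhds hr1)
  refine ⟨r, r.2, by exact_mod_cast hr2, ?_⟩
  filter_upwards [hev, Filter.eventually_gt_atTop 0] with n hn hn0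
  have h1 : ‖M ^ n‖ = ‖(M.map Complex.ofReal) ^ n‖ := by
    have : (M.map Complex.ofReal) ^ n = (M ^ n).map Complex.ofReal :=
      (map_pow (Complex.ofRealHom.mapMatrix (m := Fin d)) M n).symm
    rw [this]
    exact (Matrix.frobenius_norm_map_eq (M ^ n) Complex.ofReal (fun a => by simp)).symm
  rw [h1]
  have h2 : ((‖(M.map Complex.ofReal) ^ n‖₊ : ENNReal)) ≤ (r : ENNReal) ^ n := by
    have hn' : (n : ℝ) ≠ 0 := by positivity
    calc ((‖(M.map Complex.ofReal) ^ n‖₊ : ENNReal))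
        = (((‖(M.map Complex.ofReal) ^ n‖₊ : ENNReal)) ^ (1 / (n:ℝ))) ^ n := by
          rw [← ENNReal.rpow_natCast, ← ENNReal.rpow_mul]
          simp [hn']
      _ ≤ _ := by gcongr
  exact_mod_cast h2

theorem summable_lyap {d : ℕ} (M S : Matrix (Fin d) (Fin d) ℝ) (h : IsStable M) :
    Summable (fun t : ℕ => (M ^ t)ᵀ * S * M ^ t) := by
  obtain ⟨r, hr0, hr1, hr⟩ := pow_bound_aux M h
  have hs : Summable (fun n : ℕ => ‖S‖ * (r ^ 2) ^ n) := by
    apply Summable.mul_left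
    apply summable_geometric_of_lt_one (by positivity)
    nlinarith
  refine Summable.of_norm_bounded_eventually_nat hs ?_
  filter_upwards [hr] with n hn
  calc ‖(M ^ n)ᵀ * S * M ^ n‖ ≤ ‖(M ^ n)ᵀ‖ * ‖S‖ * ‖M ^ n‖ := by
        refine (norm_mul_le _ _).trans ?_
        gcongr
        exact norm_mul_le _ _
    _ = ‖M ^ n‖ * ‖S‖ * ‖M ^ n‖ := by rw [Matrix.frobenius_norm_transpose]
    _ ≤ r ^ n * ‖S‖ * r ^ n := by gcongr
    _ = _ := by ring

end helpers

theorem evnorm_sq {n : ℕ} (v : Fin n → ℝ) : evnorm v ^ 2 = v ⬝ᵥ v := by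
  unfold evnorm
  rw [EuclideanSpace.norm_sq_eq]
  simp [dotProduct, sq]

theorem evnorm_nonneg {n : ℕ} (v : Fin n → ℝ) : 0 ≤ evnorm v := norm_nonneg _

theorem quad_le {n : ℕ} (P : Matrix (Fin n) (Fin n) ℝ) (v : Fin n → ℝ) :
    v ⬝ᵥ P.mulVec v ≤ opNorm P * (v ⬝ᵥ v) := by
  rw [← evnorm_sq]
  have h1 : v ⬝ᵥ P.mulVec v = inner ℝ (WithLp.toLp 2 (P.mulVec v)) (WithLp.toLp 2 v) := by
    rw [EuclideanSpace.inner_toLp_toLp]; simp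
  have h2 := real_inner_le_norm (WithLp.toLp 2 (P.mulVec v)) (WithLp.toLp 2 v)
  have h3 := (LinearMap.toContinuousLinearMap (Matrix.toEuclideanLin P)).le_opNorm (WithLp.toLp 2 v)
  have h4 : ‖WithLp.toLp 2 (P.mulVec v)‖ ≤ opNorm P * evnorm v := h3
  have h5 : ‖WithLp.toLp 2 v‖ = evnorm v := rfl
  rw [h1]
  refine h2.trans ?_
  rw [h5, sq, ← mul_assoc]
  exact mul_le_mul_of_nonneg_right h4 (evnorm_nonneg v)

theorem lyap_facts {d m : ℕ} (A : Matrix (Fin d) (Fin d) ℝ) (B : Matrix (Fin d) (Fin m) ℝ)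
    (Q : Matrix (Fin d) (Fin d) ℝ) (R : Matrix (Fin m) (Fin m) ℝ)
    (K : Matrix (Fin m) (Fin d) ℝ) (γ : ℝ) (hγ : 0 < γ)
    (hS : (Q + Kᵀ * R * K).PosSemidef)
    (hstab : IsStable (Real.sqrt γ • (A + B * K))) :
    (lyapP A B Q R K γ)ᵀ = lyapP A B Q R K γ ∧
    (∀ v, 0 ≤ v ⬝ᵥ (lyapP A B Q R K γ).mulVec v) ∧
    (lyapP A B Q R K γ) = (Q + Kᵀ * R * K) +
      γ • ((A + B * K)ᵀ * lyapP A B Q R K γ * (A + B * K)) := by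
  have hsum := summable_lyap _ (Q + Kᵀ * R * K) hstab
  have hterm : (fun t : ℕ => ((Real.sqrt γ • (A + B * K)) ^ t)ᵀ * (Q + Kᵀ * R * K) *
      (Real.sqrt γ • (A + B * K)) ^ t) = fun t : ℕ => γ ^ t • (((A + B * K) ^ t)ᵀ * (Q + Kᵀ * R * K) * (A + B * K) ^ t) := by
    funext t
    have : γ ^ t = Real.sqrt γ ^ t * Real.sqrt γ ^ t := by
      rw [← mul_pow, Real.mul_self_sqrt hγ.le]
    rw [smul_pow, this, Matrix.transpose_smul, Matrix.smul_mul, Matrix.smul_mul, Matrix.mul_smul,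
      smul_smul]
  rw [hterm] at hsum
  set S := Q + Kᵀ * R * K with hSdef
  set C := A + B * K with hC
  have hP : lyapP A B Q R K γ = ∑' t : ℕ, γ ^ t • ((C ^ t)ᵀ * S * C ^ t) := rfl
  have hST : Sᵀ = S := by
    have := hS.1.eq
    rwa [Matrix.conjTranspose_eq_transpose_of_trivial] at this
  refine ⟨?_, ?_, ?_⟩
  · rw [hP, Matrix.transpose_tsum]
    congr 1; funext t
    simp [Matrix.transpose_mul, hST, Matrix.mul_assoc]
  · intro v
    let L : Matrix (Fin d) (Fin d) ℝ →+ ℝ :=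
      { toFun := fun N => v ⬝ᵥ N.mulVec v
        map_zero' := by simp
        map_add' := by intro a b; simp [Matrix.add_mulVec, dotProduct_add] }
    have hL : Continuous L := by
      show Continuous fun N : Matrix (Fin d) (Fin d) ℝ => v ⬝ᵥ N.mulVec v
      fun_prop
    have := hsum.hasSum.map L hL
    refine this.nonneg ?_
    intro t
    show 0 ≤ v ⬝ᵥ (γ ^ t • ((C ^ t)ᵀ * S * C ^ t)).mulVec v
    rw [Matrix.smul_mulVec, dotProduct_smul, smul_eq_mul]
    refine mul_nonneg (by positivity) ?_
    have h := hS.dotProduct_mulVec_nonneg ((C ^ t).mulVec v)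
    rw [← Matrix.mulVec_mulVec, ← Matrix.mulVec_mulVec, Matrix.dotProduct_mulVec, Matrix.vecMul_transpose]
    simpa using h
  · rw [hP]
    conv_lhs => rw [hsum.tsum_eq_zero_add]
    congr 1
    · simp
    · rw [← hsum.tsum_mul_left, ← (hsum.mul_left _).tsum_mul_right, ← tsum_const_smul'']
      congr 1; funext t
      rw [pow_succ C t, Matrix.transpose_mul, pow_succ γ t, mul_comm (γ ^ t) γ, ← smul_smul,
        Matrix.mul_smul, Matrix.smul_mul]
      simp only [Matrix.mul_assoc]

theorem real_step (V q e c z p β r V' : ℝ) (hp : 1 ≤ p) (hβ : 1 ≤ β)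
    (hr0 : 0 < r) (hr1 : r ≤ 1) (hq : 0 ≤ q) (he : 0 ≤ e) (hVe : V = q + e)
    (hVq : V ≤ p * q)
    (hz : z ≤ p * (β * q) ^ 2) (hz0 : 0 ≤ z)
    (hc : 2 * c ≤ (1 / (2 * p)) * e + (2 * p) * z)
    (hV : V ≤ r ^ 2 / (4 * β ^ 2 * p ^ 3)) (hV' : V' = e + 2 * c + z) :
    V' ≤ V - q / 4 := by
  have hp0 : 0 < p := by linarith
  have hr2 : r ^ 2 ≤ 1 := by nlinarith
  have hb : V * (4 * β ^ 2 * p ^ 3) ≤ 1 := by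
    rw [le_div_iff₀ (by positivity)] at hV
    linarith
  have hqb : q * (4 * β ^ 2 * p ^ 3) ≤ 1 := by
    refine le_trans ?_ hb
    gcongr; linarith
  -- z * 4p² ≤ q
  have hzq : z * (4 * p ^ 2) ≤ q := by
    calc z * (4 * p ^ 2) ≤ p * (β * q) ^ 2 * (4 * p ^ 2) := by gcongr
      _ = q * (q * (4 * β ^ 2 * p ^ 3)) := by ring
      _ ≤ q * 1 := by gcongr
      _ = q := by ring
  have h1 : 1 / (2 * p) * e ≤ (p - 1) * q / (2 * p) := by
    rw [div_mul_eq_mul_div, one_mul]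
    gcongr
    linarith
  have h2 : 2 * p * z ≤ q / (2 * p) := by
    rw [le_div_iff₀ (by positivity)]; linarith
  have h3 : z ≤ q / 4 := by nlinarith [mul_le_mul_of_nonneg_left (one_le_pow₀ hp : 1 ≤ p ^ 2) hz0]
  have h4 : (p - 1) * q / (2 * p) + q / (2 * p) = q / 2 := by field_simp; ring
  linarith

/-- Performance difference: the nonlinear cost converges, and its difference from the
linearized (Lyapunov) cost `x₀ᵀPx₀` is given by a series of cross terms involving the
nonlinear remainder. -/
theorem performance_difference {d m : ℕ}
    (G : (Fin d → ℝ) → (Fin m → ℝ) → (Fin d → ℝ))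
    (A : Matrix (Fin d) (Fin d) ℝ) (B : Matrix (Fin d) (Fin m) ℝ)
    (Q : Matrix (Fin d) (Fin d) ℝ) (R : Matrix (Fin m) (Fin m) ℝ)
    (K : Matrix (Fin m) (Fin d) ℝ)
    (β rnl : ℝ) (hβ : 1 ≤ β) (hrnl0 : 0 < rnl) (hrnl1 : rnl ≤ 1)
    (hf : ∀ (x : Fin d → ℝ) (u : Fin m → ℝ), evnorm x + evnorm u ≤ rnl →
      evnorm (G x u - (A.mulVec x + B.mulVec u)) ≤ β * (evnorm x ^ 2 + evnorm u ^ 2))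
    (γ : ℝ) (hγ : γ ∈ Set.Ioc (0 : ℝ) 1)
    (hQ : (Q - 1).PosSemidef) (hR : (R - 1).PosSemidef)
    (hstab : IsStable (Real.sqrt γ • (A + B * K)))
    (x : ℕ → Fin d → ℝ)
    (hstep : ∀ t : ℕ, x (t + 1) = Real.sqrt γ • G (x t) (K.mulVec (x t)))
    (hV0 : x 0 ⬝ᵥ (lyapP A B Q R K γ).mulVec (x 0)
        ≤ rnl ^ 2 / (4 * β ^ 2 * opNorm (lyapP A B Q R K γ) ^ 3)) :
    Summable (fun t : ℕ => x t ⬝ᵥ (Q + Kᵀ * R * K).mulVec (x t))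
    ∧ (∑' t : ℕ, x t ⬝ᵥ (Q + Kᵀ * R * K).mulVec (x t))
          - x 0 ⬝ᵥ (lyapP A B Q R K γ).mulVec (x 0)
        = ∑' t : ℕ,
            γ * ((G (x t) (K.mulVec (x t))
                    - (A.mulVec (x t) + B.mulVec (K.mulVec (x t))))
                  ⬝ᵥ (lyapP A B Q R K γ).mulVec
                      (G (x t) (K.mulVec (x t)) + (A + B * K).mulVec (x t))) := by
  rcases Nat.eq_zero_or_pos d with hd | hd
  · subst hd
    simp [dotProduct]
  obtain ⟨hγ0, hγ1⟩ := hγ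
  have hQs : ∀ v : Fin d → ℝ, v ⬝ᵥ v + (K.mulVec v) ⬝ᵥ (K.mulVec v)
      ≤ v ⬝ᵥ (Q + Kᵀ * R * K).mulVec v := by
    intro v
    have h1 := hQ.dotProduct_mulVec_nonneg v
    have h2 := hR.dotProduct_mulVec_nonneg (K.mulVec v)
    simp only [star_trivial, Matrix.sub_mulVec, dotProduct_sub, Matrix.one_mulVec] at h1 h2
    have h3 : v ⬝ᵥ (Kᵀ * R * K).mulVec v = (K.mulVec v) ⬝ᵥ R.mulVec (K.mulVec v) := by
      rw [← Matrix.mulVec_mulVec, ← Matrix.mulVec_mulVec, Matrix.dotProduct_mulVec,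
        Matrix.vecMul_transpose]
    rw [Matrix.add_mulVec, dotProduct_add, h3]
    linarith
  have hdot : ∀ {n : ℕ} (v : Fin n → ℝ), 0 ≤ v ⬝ᵥ v := fun v => by
    rw [← evnorm_sq]; positivity
  have hQT : Q.IsHermitian := by
    have := hQ.1.add (Matrix.isHermitian_one (n := Fin d) (α := ℝ))
    simpa using this
  have hRT : R.IsHermitian := by
    have := hR.1.add (Matrix.isHermitian_one (n := Fin m) (α := ℝ))
    simpa using this
  have hS : (Q + Kᵀ * R * K).PosSemidef := by
    refine Matrix.PosSemidef.of_dotProduct_mulVec_nonneg ?_ ?_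
    · refine hQT.add ?_
      have := Matrix.isHermitian_conjTranspose_mul_mul K hRT
      simpa using this
    · intro v
      have := hQs v
      have := hdot v
      have := hdot (K.mulVec v)
      simp only [star_trivial]
      linarith
  obtain ⟨hPT, hP0, hPe⟩ := lyap_facts A B Q R K γ hγ0 hS hstab
  set P := lyapP A B Q R K γ with hPdef
  set S := Q + Kᵀ * R * K with hSdef
  set C := A + B * K with hC
  have hsym : ∀ v w : Fin d → ℝ, v ⬝ᵥ P.mulVec w = w ⬝ᵥ P.mulVec v := by
    intro v w
    rw [Matrix.dotProduct_mulVec, ← Matrix.mulVec_transpose, hPT, dotProduct_comm]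
  have hlyap : ∀ v : Fin d → ℝ, v ⬝ᵥ P.mulVec v = v ⬝ᵥ S.mulVec v
      + γ * ((C.mulVec v) ⬝ᵥ P.mulVec (C.mulVec v)) := by
    intro v
    conv_lhs => rw [hPe]
    rw [Matrix.add_mulVec, dotProduct_add, Matrix.smul_mulVec, dotProduct_smul, smul_eq_mul,
      ← Matrix.mulVec_mulVec, ← Matrix.mulVec_mulVec, Matrix.dotProduct_mulVec v Cᵀ,
      Matrix.vecMul_transpose]
  have hp1 : 1 ≤ opNorm P := by
    let v : Fin d → ℝ := fun _ => 1
    have hv : 0 < v ⬝ᵥ v := by simp [v, dotProduct, hd]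
    have h1 := quad_le P v
    have h2 := hlyap v
    have h3 := mul_nonneg hγ0.le (hP0 (C.mulVec v))
    have h4 := hQs v
    have h5 := hdot (K.mulVec v)
    by_contra hlt
    push Not at hlt
    nlinarith
  set p := opNorm P with hpdef
  let V : ℕ → ℝ := fun t => x t ⬝ᵥ P.mulVec (x t)
  let q : ℕ → ℝ := fun t => x t ⬝ᵥ S.mulVec (x t)
  let f : ℕ → Fin d → ℝ := fun t => G (x t) (K.mulVec (x t))
                    - (A.mulVec (x t) + B.mulVec (K.mulVec (x t)))
  have hG : ∀ t, G (x t) (K.mulVec (x t)) = C.mulVec (x t) + f t := by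
    intro t
    simp only [f, hC, Matrix.add_mulVec, Matrix.mulVec_mulVec]
    abel
  have hq0 : ∀ t, 0 ≤ q t := fun t => by
    have := hQs (x t)
    have := hdot (x t)
    have := hdot (K.mulVec (x t))
    simp only [q]; linarith
  have hVstep : ∀ t, V (t + 1) = γ * (C.mulVec (x t) ⬝ᵥ P.mulVec (C.mulVec (x t)))
      + 2 * (γ * (f t ⬝ᵥ P.mulVec (C.mulVec (x t)))) + γ * (f t ⬝ᵥ P.mulVec (f t)) := by
    intro t
    simp only [V]
    rw [hstep t, hG t, Matrix.mulVec_smul, smul_dotProduct, dotProduct_smul, smul_eq_mul,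
      smul_eq_mul, ← mul_assoc, Real.mul_self_sqrt hγ0.le, Matrix.mulVec_add, dotProduct_add,
      add_dotProduct, add_dotProduct, hsym (C.mulVec (x t)) (f t)]
    ring
  have hVe : ∀ t, V t = q t + γ * (C.mulVec (x t) ⬝ᵥ P.mulVec (C.mulVec (x t))) :=
    fun t => hlyap (x t)
  have hdiff : ∀ t, γ * (f t ⬝ᵥ P.mulVec (G (x t) (K.mulVec (x t)) + C.mulVec (x t)))
      = q t + V (t + 1) - V t := by
    intro t
    rw [hVstep, hVe, hG, Matrix.mulVec_add, Matrix.mulVec_add, dotProduct_add, dotProduct_add]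
    ring
  have hVq : ∀ t, V t ≤ p * q t := fun t => by
    refine (quad_le P (x t)).trans ?_
    have := hQs (x t)
    have := hdot (K.mulVec (x t))
    exact mul_le_mul_of_nonneg_left (by simp only [q]; linarith) (by linarith)
  have hdec : ∀ t, V t ≤ rnl ^ 2 / (4 * β ^ 2 * p ^ 3) → V (t + 1) ≤ V t - q t / 4 := by
    intro t ht
    have he0 : 0 ≤ γ * (C.mulVec (x t) ⬝ᵥ P.mulVec (C.mulVec (x t))) :=
      mul_nonneg hγ0.le (hP0 _)
    have hqt := hQs (x t)
    have hqV : q t ≤ V t := by rw [hVe t]; linarith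
    have hV4 : V t ≤ rnl ^ 2 / 4 := by
      refine ht.trans ?_
      have h1 : 1 ≤ β ^ 2 := one_le_pow₀ hβ
      have h2 : 1 ≤ p ^ 3 := one_le_pow₀ hp1
      gcongr
      nlinarith
    have hsmall : evnorm (x t) + evnorm (K.mulVec (x t)) ≤ rnl := by
      rw [← evnorm_sq, ← evnorm_sq] at hqt
      apply le_of_sq_le_sq _ hrnl0.le
      have : evnorm (x t) ^ 2 + evnorm (K.mulVec (x t)) ^ 2 ≤ q t := hqt
      nlinarith [sq_nonneg (evnorm (x t) - evnorm (K.mulVec (x t)))]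
    have hft := hf _ _ hsmall
    have hfq : evnorm (f t) ≤ β * q t := by
      refine hft.trans ?_
      rw [evnorm_sq, evnorm_sq]
      exact mul_le_mul_of_nonneg_left hqt (by linarith)
    have hz0 : 0 ≤ f t ⬝ᵥ P.mulVec (f t) := hP0 _
    have hz : γ * (f t ⬝ᵥ P.mulVec (f t)) ≤ p * (β * q t) ^ 2 := by
      calc γ * (f t ⬝ᵥ P.mulVec (f t)) ≤ 1 * (f t ⬝ᵥ P.mulVec (f t)) := by gcongr
        _ ≤ p * (f t ⬝ᵥ f t) := by rw [one_mul]; exact quad_le P (f t)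
        _ = p * evnorm (f t) ^ 2 := by rw [evnorm_sq]
        _ ≤ _ := by
          have := evnorm_nonneg (f t)
          gcongr
    have hc : 2 * (γ * (f t ⬝ᵥ P.mulVec (C.mulVec (x t)))) ≤
        (1 / (2 * p)) * (γ * (C.mulVec (x t) ⬝ᵥ P.mulVec (C.mulVec (x t))))
          + (2 * p) * (γ * (f t ⬝ᵥ P.mulVec (f t))) := by
      have h1 := hP0 (C.mulVec (x t) - (2 * p) • f t)
      rw [Matrix.mulVec_sub, dotProduct_sub, sub_dotProduct, sub_dotProduct, Matrix.mulVec_smul,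
        smul_dotProduct, smul_dotProduct, dotProduct_smul, dotProduct_smul,
        hsym (C.mulVec (x t)) (f t)] at h1
      simp only [smul_eq_mul] at h1
      have h2 := mul_nonneg (mul_nonneg (by positivity : 0 ≤ 1 / (2 * p)) hγ0.le) h1
      have h3 : 1 / (2 * p) * (2 * p) = 1 := by field_simp
      linear_combination h2 - (2 * (γ * (f t ⬝ᵥ P.mulVec (C.mulVec (x t))))
        - 2 * p * (γ * (f t ⬝ᵥ P.mulVec (f t)))) * h3
    exact real_step (V t) (q t) _ _ _ p β rnl _ hp1 hβ hrnl0 hrnl1 (hq0 t) he0 (hVe t)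
      (hVq t) hz (mul_nonneg hγ0.le hz0) hc ht (hVstep t)
  have hVb : ∀ t, V t ≤ rnl ^ 2 / (4 * β ^ 2 * p ^ 3) := by
    intro t
    induction t with
    | zero => exact hV0
    | succ t ih =>
      have := hdec t ih
      have := hq0 t
      linarith
  have hsumb : ∀ n, ∑ t ∈ Finset.range n, q t ≤ 4 * V 0 - 4 * V n := by
    intro n
    induction n with
    | zero => simp
    | succ n ih =>
      rw [Finset.sum_range_succ]
      have := hdec n (hVb n)
      linarith
  have hsum : Summable q := by
    refine summable_of_sum_range_le (c := 4 * V 0) hq0 ?_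
    intro n
    have : 0 ≤ V n := hP0 _
    have := hsumb n
    linarith
  have hVlim : Filter.Tendsto V Filter.atTop (nhds 0) := by
    have h1 := hsum.tendsto_atTop_zero.const_mul p
    rw [mul_zero] at h1
    exact squeeze_zero (fun t => hP0 _) hVq h1
  have hVsum : Summable V :=
    Summable.of_nonneg_of_le (fun t => hP0 _) hVq (hsum.mul_left p)
  refine ⟨hsum, ?_⟩
  have hV1 : Summable (fun t => V (t + 1)) := (summable_nat_add_iff 1).2 hVsum
  have hgoal : (∑' t : ℕ, γ * (f t ⬝ᵥ P.mulVec (G (x t) (K.mulVec (x t)) + C.mulVec (x t))))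
      = ∑' t, q t - V 0 := by
    rw [tsum_congr hdiff, (hsum.add hV1).tsum_sub hVsum, hsum.tsum_add hV1,
      hVsum.tsum_eq_zero_add]
    ring
  exact hgoal.symm
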